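/- Let a ≥ b ≥ k ≥ 1. Then the image of γ_k: Λ^a⊗Λ^k⊗Λ^{b−k} → Λ^a⊗Λ^b is contained in the image of θ_1: Λ^{a+1}⊗Λ^{b−1} → Λ^a⊗Λ^b. -/

import Mathlib

open TensorProduct

set_option synthInstance.maxHeartbeats 1000000
set_option maxSynthPendingDepth 3
set_option maxHeartbeats 1000000

noncomputable section

namespace MMS

variable (K : Type) [Field K] [CharZero K] (n : ℕ)

/-- `V = K^n`, the natural module of `G = GL(n,K)`. -/
abbrev V : Type := Fin n → K

/-- `Λ^p`, the `p`-th exterior power of `V`. -/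
abbrev Lam (p : ℕ) : Type := ⋀[K]^p (V K n)

/-- The wedge `v_1 ∧ ⋯ ∧ v_p ∈ Λ^p`. -/
def wedge {p : ℕ} (v : Fin p → V K n) : Lam K n p :=
  ⟨ExteriorAlgebra.ιMulti K p v, ExteriorAlgebra.ιMulti_range K p (Set.mem_range_self v)⟩

/-- Transport along an equality of degrees. -/
def ecast {p q : ℕ} (h : p = q) : Lam K n p ≃ₗ[K] Lam K n q :=
  h ▸ LinearEquiv.refl K (Lam K n p)

/-- `m` is the wedge multiplication map `Λ^p ⊗ Λ^q → Λ^{p+q}`. -/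
def IsMulMap (p q : ℕ) (m : Lam K n p ⊗[K] Lam K n q →ₗ[K] Lam K n (p+q)) : Prop :=
  ∀ (v : Fin p → V K n) (w : Fin q → V K n),
    m (wedge K n v ⊗ₜ[K] wedge K n w) = wedge K n (Fin.append v w)

/-- The set of `(p,q)`-shuffles: permutations `σ` of `{1, …, p+q}` which are strictly
increasing on the first `p` and on the last `q` indices. -/
def shuffles (p q : ℕ) : Finset (Equiv.Perm (Fin (p+q))) :=
  Finset.univ.filter (fun σ =>
    (∀ i j : Fin (p+q), i < j → (j : ℕ) < p → σ i < σ j) ∧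
    (∀ i j : Fin (p+q), i < j → p ≤ (i : ℕ) → σ i < σ j))

/-- `D` is the component `Δ_{p,q} : Λ^{p+q} → Λ^p ⊗ Λ^q` of the comultiplication, i.e.
`Δ_{p,q}(v_1 ∧ ⋯ ∧ v_{p+q}) = Σ_σ sgn(σ) (v_{σ(1)} ∧ ⋯ ∧ v_{σ(p)}) ⊗ (v_{σ(p+1)} ∧ ⋯ ∧ v_{σ(p+q)})`,
the sum being over all `(p,q)`-shuffles. -/
def IsComulMap (p q : ℕ) (D : Lam K n (p+q) →ₗ[K] Lam K n p ⊗[K] Lam K n q) : Prop :=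
  ∀ v : Fin (p+q) → V K n,
    D (wedge K n v) =
      ∑ σ ∈ shuffles p q,
        (Equiv.Perm.sign σ : ℤ) •
          (wedge K n (fun i => v (σ (Fin.castAdd q i))) ⊗ₜ[K]
            wedge K n (fun i => v (σ (Fin.natAdd p i))))

variable (mf : ∀ p q : ℕ, Lam K n p ⊗[K] Lam K n q →ₗ[K] Lam K n (p+q))
variable (Df : ∀ p q : ℕ, Lam K n (p+q) →ₗ[K] Lam K n p ⊗[K] Lam K n q)

/-- The map `δ_t = (m ⊗ 1) ∘ (1 ⊗ Δ_{t,b-t}) : Λ^a ⊗ Λ^b → Λ^{a+t} ⊗ Λ^{b-t}`. -/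
def deltaMap (a b t : ℕ) (ht : t ≤ b) :
    Lam K n a ⊗[K] Lam K n b →ₗ[K] Lam K n (a+t) ⊗[K] Lam K n (b-t) :=
  (TensorProduct.map (mf a t) LinearMap.id)
    ∘ₗ (TensorProduct.assoc K (Lam K n a) (Lam K n t) (Lam K n (b-t))).symm.toLinearMap
    ∘ₗ (TensorProduct.map LinearMap.id
        ((Df t (b-t)) ∘ₗ (ecast K n (by omega : b = t + (b-t))).toLinearMap))

/-- The map `θ_t = (1 ⊗ m) ∘ (Δ_{a-t,t} ⊗ 1) : Λ^a ⊗ Λ^b → Λ^{a-t} ⊗ Λ^{b+t}`. -/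
def thetaMap (a b t : ℕ) (ht : t ≤ a) :
    Lam K n a ⊗[K] Lam K n b →ₗ[K] Lam K n (a-t) ⊗[K] Lam K n (b+t) :=
  (TensorProduct.map LinearMap.id
      ((ecast K n (by omega : t + b = b + t)).toLinearMap ∘ₗ mf t b))
    ∘ₗ (TensorProduct.assoc K (Lam K n (a-t)) (Lam K n t) (Lam K n b)).toLinearMap
    ∘ₗ (TensorProduct.map
        ((Df (a-t) t) ∘ₗ (ecast K n (by omega : a = (a-t) + t)).toLinearMap) LinearMap.id)

/-- The map `Φ_t = θ_t ∘ δ_t : Λ^a ⊗ Λ^b → Λ^a ⊗ Λ^b`. -/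
def PhiMap (a b t : ℕ) (hta : t ≤ a) (htb : t ≤ b) :
    Lam K n a ⊗[K] Lam K n b →ₗ[K] Lam K n a ⊗[K] Lam K n b :=
  (TensorProduct.congr (ecast K n (by omega : a + t - t = a))
      (ecast K n (by omega : b - t + t = b))).toLinearMap
    ∘ₗ thetaMap K n mf Df (a+t) (b-t) t (by omega)
    ∘ₗ deltaMap K n mf Df a b t htb

/-- The map `Φ_t`, extended by `0` to all `t`. -/
def PhiMap' (a b t : ℕ) :
    Lam K n a ⊗[K] Lam K n b →ₗ[K] Lam K n a ⊗[K] Lam K n b :=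
  if h : t ≤ a ∧ t ≤ b then PhiMap K n mf Df a b t h.1 h.2 else 0

/-- The map `θ_1 : Λ^{a+1} ⊗ Λ^{b-1} → Λ^a ⊗ Λ^b` (for `b ≥ 1`). -/
def theta1 (a b : ℕ) (hb : 1 ≤ b) :
    Lam K n (a+1) ⊗[K] Lam K n (b-1) →ₗ[K] Lam K n a ⊗[K] Lam K n b :=
  (TensorProduct.congr (ecast K n (by omega : a + 1 - 1 = a))
      (ecast K n (by omega : b - 1 + 1 = b))).toLinearMap
    ∘ₗ thetaMap K n mf Df (a+1) (b-1) 1 (by omega)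

/-- The submodule of relations defining the Schur module `L_{(a,b)}`: the image of
`θ_1` if `b ≥ 1`, and `0` if `b = 0`. -/
def schurRel (a b : ℕ) : Submodule K (Lam K n a ⊗[K] Lam K n b) :=
  if hb : 1 ≤ b then LinearMap.range (theta1 K n mf Df a b hb) else ⊥

/-- The Schur module `L_{(a,b)}`, realized as the cokernel of `θ_1` (in characteristic zero). -/
abbrev SchurL (a b : ℕ) : Type :=
  (Lam K n a ⊗[K] Lam K n b) ⧸ schurRel K n mf Df a b

/-- The projection `π_{(a,b)} : Λ^a ⊗ Λ^b → L_{(a,b)}`. -/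
def schurProj (a b : ℕ) : Lam K n a ⊗[K] Lam K n b →ₗ[K] SchurL K n mf Df a b :=
  (schurRel K n mf Df a b).mkQ

/-- The coefficient `c_t(a,b,i) = C(i,t)·C(a-b+t+i,t)`. -/
def cCoef (a b t i : ℕ) : ℕ := (i.choose t) * ((a-b+t+i).choose t)

/-- The group `G = GL(n,K)`. -/
abbrev GLn : Type := Matrix.GeneralLinearGroup (Fin n) K

/-- `rho` is the family of natural actions of `G = GL(n,K)` on the exterior powers `Λ^p`
of the natural module `V = K^n`. -/
def IsExtAction (rho : ∀ p : ℕ, GLn K n → (Lam K n p →ₗ[K] Lam K n p)) : Prop :=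
  ∀ (p : ℕ) (g : GLn K n) (v : Fin p → V K n),
    rho p g (wedge K n v) =
      wedge K n (fun i => Matrix.toLin' (g : Matrix (Fin n) (Fin n) K) (v i))

/-- The action of `g ∈ GL(n,K)` on `Λ^a ⊗ Λ^b`. -/
def rhoT (rho : ∀ p : ℕ, GLn K n → (Lam K n p →ₗ[K] Lam K n p)) (a b : ℕ) (g : GLn K n) :
    Lam K n a ⊗[K] Lam K n b →ₗ[K] Lam K n a ⊗[K] Lam K n b :=
  TensorProduct.map (rho a g) (rho b g)

/-- The quotients `M₁ ⧸ N₁` and `M₂ ⧸ N₂` are isomorphic as representations, with respect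
to the given actions `ρ₁, ρ₂` on `M₁` and `M₂` (which descend to the quotients). -/
def IsQuotIso {G' : Type} {M₁ M₂ : Type} [AddCommGroup M₁] [Module K M₁]
    [AddCommGroup M₂] [Module K M₂]
    (N₁ : Submodule K M₁) (N₂ : Submodule K M₂)
    (ρ₁ : G' → M₁ →ₗ[K] M₁) (ρ₂ : G' → M₂ →ₗ[K] M₂) : Prop :=
  ∃ e : (M₁ ⧸ N₁) ≃ₗ[K] (M₂ ⧸ N₂),
    ∀ (g : G') (x : M₁) (y : M₂),
      e (Submodule.Quotient.mk x) = Submodule.Quotient.mk y →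
      e (Submodule.Quotient.mk (ρ₁ g x)) = Submodule.Quotient.mk (ρ₂ g y)

/-- The "multiply in pairs" map
`(Λ^{p₁} ⊗ Λ^{q₁}) ⊗ (Λ^{p₂} ⊗ Λ^{q₂}) → Λ^{p₁+p₂} ⊗ Λ^{q₁+q₂}`. -/
def pairMul (p₁ q₁ p₂ q₂ : ℕ) :
    (Lam K n p₁ ⊗[K] Lam K n q₁) ⊗[K] (Lam K n p₂ ⊗[K] Lam K n q₂) →ₗ[K]
      Lam K n (p₁+p₂) ⊗[K] Lam K n (q₁+q₂) :=
  (TensorProduct.map (mf p₁ p₂) (mf q₁ q₂))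
    ∘ₗ (TensorProduct.tensorTensorTensorComm K (Lam K n p₁) (Lam K n q₁)
        (Lam K n p₂) (Lam K n q₂)).toLinearMap

/-- The map `φ_k = (m ⊗ m) ∘ (1 ⊗ τ ⊗ 1) ∘ (Δ_{a-k,k} ⊗ Δ_{k,b-k}) : Λ^a ⊗ Λ^b → Λ^a ⊗ Λ^b`. -/
def phiSmall (a b k : ℕ) (hka : k ≤ a) (hkb : k ≤ b) :
    Lam K n a ⊗[K] Lam K n b →ₗ[K] Lam K n a ⊗[K] Lam K n b :=
  (TensorProduct.congr (ecast K n (by omega : (a-k) + k = a))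
      (ecast K n (by omega : k + (b-k) = b))).toLinearMap
    ∘ₗ pairMul K n mf (a-k) k k (b-k)
    ∘ₗ (TensorProduct.map
        ((Df (a-k) k) ∘ₗ (ecast K n (by omega : a = (a-k) + k)).toLinearMap)
        ((Df k (b-k)) ∘ₗ (ecast K n (by omega : b = k + (b-k))).toLinearMap))

/-- The map `ψ_k = C(b,k)·1 - φ_k : Λ^a ⊗ Λ^b → Λ^a ⊗ Λ^b`. -/
def psiSmall (a b k : ℕ) (hka : k ≤ a) (hkb : k ≤ b) :
    Lam K n a ⊗[K] Lam K n b →ₗ[K] Lam K n a ⊗[K] Lam K n b :=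
  (Nat.choose b k : K) • LinearMap.id - phiSmall K n mf Df a b k hka hkb

/-- The map `β_k = (m ⊗ m) ∘ (1 ⊗ τ ⊗ 1) ∘ (Δ_{a-k,k} ⊗ 1 ⊗ 1) : Λ^a ⊗ (Λ^k ⊗ Λ^{b-k}) → Λ^a ⊗ Λ^b`. -/
def betaMap (a b k : ℕ) (hka : k ≤ a) (hkb : k ≤ b) :
    Lam K n a ⊗[K] (Lam K n k ⊗[K] Lam K n (b-k)) →ₗ[K] Lam K n a ⊗[K] Lam K n b :=
  (TensorProduct.congr (ecast K n (by omega : (a-k) + k = a))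
      (ecast K n (by omega : k + (b-k) = b))).toLinearMap
    ∘ₗ pairMul K n mf (a-k) k k (b-k)
    ∘ₗ (TensorProduct.map
        ((Df (a-k) k) ∘ₗ (ecast K n (by omega : a = (a-k) + k)).toLinearMap)
        LinearMap.id)

/-- The map `γ_k : Λ^a ⊗ (Λ^k ⊗ Λ^{b-k}) → Λ^a ⊗ Λ^b`,
`γ_k(x ⊗ y ⊗ z) = x ⊗ (y ∧ z) - β_k(x ⊗ y ⊗ z)`. -/
def gammaMap (a b k : ℕ) (hka : k ≤ a) (hkb : k ≤ b) :
    Lam K n a ⊗[K] (Lam K n k ⊗[K] Lam K n (b-k)) →ₗ[K] Lam K n a ⊗[K] Lam K n b :=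
  (TensorProduct.map LinearMap.id
      ((ecast K n (by omega : k + (b-k) = b)).toLinearMap ∘ₗ mf k (b-k)))
    - betaMap K n mf Df a b k hka hkb

/-- The quantity `d_k(a,b,t)` (for the given `i`), from Lemma 5.3 of the paper. -/
def dInt (a b k i t : ℕ) : ℤ :=
  1 - ∑ j ∈ Finset.Icc (i - min (b-k) i) t,
        (-1:ℤ)^j * ((a-k+j).choose (a-k) : ℤ) * ((b-k+t-i).choose (t-j) : ℤ)

end MMS

namespace MMS

section LinearAlgebra

variable {K : Type*} [Field K] {n : ℕ}

open ExteriorAlgebra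

/-- The exterior algebra of `K^n`. -/
abbrev ExtAlg (K : Type*) [Field K] (n : ℕ) : Type _ := ExteriorAlgebra K (Fin n → K)

/-- The operator `Σ_j (· ⌊ e_j^*) ⊗ (e_j ∧ ·)` on `Λ ⊗ Λ`, which moves one vector
from the left factor to the front of the right factor. -/
def transfer (K : Type*) [Field K] (n : ℕ) :
    Module.End K (ExtAlg K n ⊗[K] ExtAlg K n) :=
  ∑ j : Fin n, TensorProduct.map
    (CliffordAlgebra.contractRight.flip (LinearMap.proj j))
    (LinearMap.mulLeft K (ι K (Pi.single j 1)))

/-- Right multiplication by `y` on the left tensor factor. -/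
def mulRightFst (y : ExtAlg K n) : Module.End K (ExtAlg K n ⊗[K] ExtAlg K n) :=
  TensorProduct.map (LinearMap.mulRight K y) LinearMap.id

/-- Left multiplication by `y` on the right tensor factor. -/
def mulLeftSnd (y : ExtAlg K n) : Module.End K (ExtAlg K n ⊗[K] ExtAlg K n) :=
  TensorProduct.map LinearMap.id (LinearMap.mulLeft K y)

@[simp]
lemma mulRightFst_tmul (y x z : ExtAlg K n) : mulRightFst y (x ⊗ₜ[K] z) = (x * y) ⊗ₜ z := rfl

@[simp]
lemma mulLeftSnd_tmul (y x z : ExtAlg K n) : mulLeftSnd y (x ⊗ₜ[K] z) = x ⊗ₜ (y * z) := rfl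

lemma transfer_tmul (x z : ExtAlg K n) :
    transfer K n (x ⊗ₜ z) = ∑ j : Fin n,
      (CliffordAlgebra.contractRight x (LinearMap.proj j) : ExtAlg K n) ⊗ₜ[K]
        (ι K (Pi.single j 1) * z) := by
  simp [transfer, LinearMap.sum_apply]

lemma sum_smul_ι_single (v : Fin n → K) :
    ∑ j, v j • ι K (Pi.single j (1 : K)) = ι K v := by
  simp_rw [← map_smul, ← map_sum]
  congr 1
  exact (pi_eq_sum_univ' v).symm

lemma transfer_mulRightFst_ι (v : Fin n → K) (t : ExtAlg K n ⊗[K] ExtAlg K n) :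
    transfer K n (mulRightFst (ι K v) t) =
      mulLeftSnd (ι K v) t - mulRightFst (ι K v) (transfer K n t) := by
  induction t with
  | zero => simp
  | add x y hx hy => simp only [map_add, hx, hy]; abel
  | tmul x z =>
    simp only [mulRightFst_tmul, transfer_tmul, mulLeftSnd_tmul, map_sum]
    rw [← sum_smul_ι_single v, Finset.sum_mul, TensorProduct.tmul_sum, ← Finset.sum_sub_distrib]
    refine Finset.sum_congr rfl fun j _ => ?_
    rw [sum_smul_ι_single v]
    erw [CliffordAlgebra.contractRight_mul_ι]
    simp [TensorProduct.sub_tmul, TensorProduct.smul_tmul']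

lemma transfer_mulLeftSnd_ι (v : Fin n → K) (t : ExtAlg K n ⊗[K] ExtAlg K n) :
    transfer K n (mulLeftSnd (ι K v) t) = - mulLeftSnd (ι K v) (transfer K n t) := by
  induction t with
  | zero => simp
  | add x y hx hy => simp only [map_add, hx, hy]; abel
  | tmul x z =>
    simp only [transfer_tmul, mulLeftSnd_tmul, map_sum, ← Finset.sum_neg_distrib]
    refine Finset.sum_congr rfl fun j _ => ?_
    rw [← TensorProduct.tmul_neg, ← mul_assoc, ← mul_assoc,
      eq_neg_of_add_eq_zero_left (ι_add_mul_swap _ v), neg_mul]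

lemma transfer_pow_mulLeftSnd_ι (v : Fin n → K) (k : ℕ) (t : ExtAlg K n ⊗[K] ExtAlg K n) :
    mulLeftSnd (ι K v) ((transfer K n ^ k) t) =
      (-1 : K) ^ k • (transfer K n ^ k) (mulLeftSnd (ι K v) t) := by
  induction k generalizing t with
  | zero => simp
  | succ k ih =>
    rw [pow_succ, Module.End.mul_apply, ih, Module.End.mul_apply, transfer_mulLeftSnd_ι]
    simp [pow_succ]

lemma mulRightFst_ι_transfer_pow (v : Fin n → K) (k : ℕ) (t : ExtAlg K n ⊗[K] ExtAlg K n) :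
    mulRightFst (ι K v) ((transfer K n ^ (k + 1)) t) =
      (-1 : K) ^ k • ((k + 1 : ℕ) : K) • (transfer K n ^ k) (mulLeftSnd (ι K v) t)
        - (-1 : K) ^ k • (transfer K n ^ (k + 1)) (mulRightFst (ι K v) t) := by
  induction k with
  | zero =>
    have := transfer_mulRightFst_ι v t
    simp [this]
  | succ k ih =>
    have h := transfer_mulRightFst_ι v ((transfer K n ^ (k + 1)) t)
    rw [ih, transfer_pow_mulLeftSnd_ι, eq_sub_iff_add_eq'] at h
    rw [pow_succ' _ (k + 1), Module.End.mul_apply, Module.End.mul_apply, eq_sub_of_add_eq h,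
      map_sub, map_smul, map_smul, map_smul, pow_succ' (transfer K n) k, Module.End.mul_apply,
      Module.End.mul_apply]
    push_cast
    module

lemma ιMulti_succ_last {p : ℕ} (x : Fin (p + 1) → Fin n → K) :
    ιMulti K (p + 1) x = ιMulti K p (x ∘ Fin.castSucc) * ι K (x (Fin.last p)) := by
  simp only [ιMulti_apply, List.ofFn_succ', List.concat_eq_append, List.prod_append,
    List.prod_singleton, Function.comp_apply]

lemma contractRight_ιMulti {p : ℕ} (d : Module.Dual K (Fin n → K)) (x : Fin (p + 1) → Fin n → K) :
    (CliffordAlgebra.contractRight (ιMulti K (p + 1) x) d : ExtAlg K n) =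
      ∑ i : Fin (p + 1), (-1 : K) ^ (i + p : ℕ) • d (x i) • ιMulti K p (x ∘ i.succAbove) := by
  induction p with
  | zero =>
    rw [ιMulti_succ_last]
    erw [CliffordAlgebra.contractRight_mul_ι]
    simp [CliffordAlgebra.contractRight_one]
  | succ p ih =>
    rw [ιMulti_succ_last]
    erw [CliffordAlgebra.contractRight_mul_ι, ih]
    rw [Fin.sum_univ_castSucc (n := p + 1), add_comm (Finset.sum _ _), sub_eq_add_neg,
      Finset.sum_mul, ← Finset.sum_neg_distrib]
    congr 1
    · simp [← two_mul, Function.comp_def]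
    · refine Finset.sum_congr rfl fun i _ => ?_
      rw [ιMulti_succ_last (x ∘ i.castSucc.succAbove)]
      have : (x ∘ i.castSucc.succAbove) ∘ Fin.castSucc = (x ∘ Fin.castSucc) ∘ i.succAbove := by
        ext j; simp
      rw [this]
      simp [pow_succ, ← add_assoc]

/-- The cycle of `0, …, p` sending `p` to `i` and preserving the order of the other elements. -/
def cycleLast {p : ℕ} (i : Fin (p + 1)) : Equiv.Perm (Fin (p + 1)) :=
  (finRotate (p + 1)).trans i.cycleRange.symm

lemma cycleLast_castSucc {p : ℕ} (i : Fin (p + 1)) (j : Fin p) :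
    cycleLast i j.castSucc = i.succAbove j := by
  simp [cycleLast]

lemma cycleLast_last {p : ℕ} (i : Fin (p + 1)) : cycleLast i (Fin.last p) = i := by
  simp [cycleLast]

lemma sign_cycleLast {p : ℕ} (i : Fin (p + 1)) :
    Equiv.Perm.sign (cycleLast i) = (-1) ^ (i + p : ℕ) := by
  simp [cycleLast, Equiv.Perm.sign_trans, Fin.sign_cycleRange, pow_add]

lemma transfer_ιMulti_tmul {p : ℕ} (x : Fin (p + 1) → Fin n → K) (w : ExtAlg K n) :
    transfer K n (ιMulti K (p + 1) x ⊗ₜ w) =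
      ∑ i : Fin (p + 1), (Equiv.Perm.sign (cycleLast i) : ℤ) •
        (ιMulti K p (fun j => x (cycleLast i j.castSucc)) ⊗ₜ[K]
          (ι K (x (cycleLast i (Fin.last p))) * w)) := by
  rw [transfer_tmul]
  simp_rw [contractRight_ιMulti, TensorProduct.sum_tmul]
  rw [Finset.sum_comm]
  refine Finset.sum_congr rfl fun i _ => ?_
  simp_rw [cycleLast_castSucc, cycleLast_last, sign_cycleLast]
  rw [← sum_smul_ι_single (x i), Finset.sum_mul, TensorProduct.tmul_sum, Finset.smul_sum]
  refine Finset.sum_congr rfl fun j _ => ?_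
  rw [← Int.cast_smul_eq_zsmul K]
  simp [TensorProduct.smul_tmul', Function.comp_def]

/-- The part of `Λ ⊗ Λ` of bidegree `(p, q)`. -/
def bideg (K : Type*) [Field K] (n p q : ℕ) : Submodule K (ExtAlg K n ⊗[K] ExtAlg K n) :=
  LinearMap.range (TensorProduct.map (⋀[K]^p (Fin n → K)).subtype (⋀[K]^q (Fin n → K)).subtype)

lemma bideg_eq_span (p q : ℕ) :
    bideg K n p q = Submodule.span K
      {t | ∃ x ∈ ⋀[K]^p (Fin n → K), ∃ z ∈ ⋀[K]^q (Fin n → K), x ⊗ₜ z = t} := by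
  rw [bideg, TensorProduct.range_map_eq_span_tmul]
  congr 1
  ext t
  simp

lemma tmul_mem_bideg {p q : ℕ} {x z : ExtAlg K n} (hx : x ∈ ⋀[K]^p (Fin n → K))
    (hz : z ∈ ⋀[K]^q (Fin n → K)) : x ⊗ₜ z ∈ bideg K n p q :=
  ⟨⟨x, hx⟩ ⊗ₜ ⟨z, hz⟩, rfl⟩

lemma map_mem_of_mem_bideg {p q : ℕ} {f : Module.End K (ExtAlg K n ⊗[K] ExtAlg K n)}
    {S : Submodule K (ExtAlg K n ⊗[K] ExtAlg K n)}
    (h : ∀ x ∈ ⋀[K]^p (Fin n → K), ∀ z ∈ ⋀[K]^q (Fin n → K), f (x ⊗ₜ z) ∈ S)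
    {t : ExtAlg K n ⊗[K] ExtAlg K n} (ht : t ∈ bideg K n p q) : f t ∈ S := by
  rw [bideg_eq_span] at ht
  refine (Submodule.span_le (p := S.comap f)).2 ?_ ht
  rintro _ ⟨x, hx, z, hz, rfl⟩
  exact h x hx z hz

lemma ι_mul_mem {q : ℕ} (v : Fin n → K) {z : ExtAlg K n} (hz : z ∈ ⋀[K]^q (Fin n → K)) :
    ι K v * z ∈ ⋀[K]^(q + 1) (Fin n → K) := by
  rw [exteriorPower, pow_succ']
  exact Submodule.mul_mem_mul ⟨v, rfl⟩ hz

lemma mulLeftSnd_mem_bideg {p q : ℕ} (v : Fin n → K) {t : ExtAlg K n ⊗[K] ExtAlg K n}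
    (ht : t ∈ bideg K n p q) : mulLeftSnd (ι K v) t ∈ bideg K n p (q + 1) :=
  map_mem_of_mem_bideg (fun _ hx _ hz => tmul_mem_bideg hx (ι_mul_mem v hz)) ht

lemma mulRightFst_mem_bideg {p q : ℕ} (v : Fin n → K) {t : ExtAlg K n ⊗[K] ExtAlg K n}
    (ht : t ∈ bideg K n p q) : mulRightFst (ι K v) t ∈ bideg K n (p + 1) q := by
  refine map_mem_of_mem_bideg (fun x hx z hz => tmul_mem_bideg ?_ hz) ht
  rw [exteriorPower, pow_succ]
  exact Submodule.mul_mem_mul hx ⟨v, rfl⟩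

lemma transfer_mem_bideg {p q : ℕ} {t : ExtAlg K n ⊗[K] ExtAlg K n}
    (ht : t ∈ bideg K n (p + 1) q) : transfer K n t ∈ bideg K n p (q + 1) := by
  refine map_mem_of_mem_bideg (fun x hx z hz => ?_) ht
  rw [← ιMulti_span_fixedDegree] at hx
  induction hx using Submodule.span_induction with
  | mem x hx =>
    obtain ⟨v, rfl⟩ := hx
    rw [transfer_ιMulti_tmul]
    exact Submodule.sum_mem _ fun i _ => zsmul_mem
      (tmul_mem_bideg (ιMulti_range K p (Set.mem_range_self _)) (ι_mul_mem _ hz)) _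
  | zero => simp
  | add x y _ _ hx hy => rw [TensorProduct.add_tmul, map_add]; exact add_mem hx hy
  | smul r x _ hx =>
    rw [← TensorProduct.smul_tmul', map_smul]; exact Submodule.smul_mem _ _ hx

lemma mulRightFst_mul (x y : ExtAlg K n) (t : ExtAlg K n ⊗[K] ExtAlg K n) :
    mulRightFst (x * y) t = mulRightFst y (mulRightFst x t) := by
  induction t with
  | zero => simp
  | add s t hs ht => simp only [map_add, hs, ht]
  | tmul a b => simp [mul_assoc]

lemma mulLeftSnd_mul (x y : ExtAlg K n) (t : ExtAlg K n ⊗[K] ExtAlg K n) :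
    mulLeftSnd (x * y) t = mulLeftSnd x (mulLeftSnd y t) := by
  induction t with
  | zero => simp
  | add s t hs ht => simp only [map_add, hs, ht]
  | tmul a b => simp [mul_assoc]

lemma mulLeftSnd_ι_swap (u v : Fin n → K) (t : ExtAlg K n ⊗[K] ExtAlg K n) :
    mulLeftSnd (ι K u) (mulLeftSnd (ι K v) t) = - mulLeftSnd (ι K v) (mulLeftSnd (ι K u) t) := by
  induction t with
  | zero => simp
  | add s t hs ht => simp only [map_add, hs, ht]; abel
  | tmul a b =>
    simp only [mulLeftSnd_tmul]
    rw [← TensorProduct.tmul_neg, ← mul_assoc, ← mul_assoc,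
      eq_neg_of_add_eq_zero_left (ι_add_mul_swap u v), neg_mul]

lemma mulLeftSnd_ι_comm (v : Fin n → K) {k : ℕ} (y : Fin k → Fin n → K)
    (t : ExtAlg K n ⊗[K] ExtAlg K n) :
    mulLeftSnd (ιMulti K k y) (mulLeftSnd (ι K v) t) =
      (-1 : K) ^ k • mulLeftSnd (ι K v) (mulLeftSnd (ιMulti K k y) t) := by
  induction k generalizing t with
  | zero => simp [mulLeftSnd]
  | succ k ih =>
    rw [ιMulti_succ_apply, mulLeftSnd_mul, mulLeftSnd_mul, ih, map_smul, mulLeftSnd_ι_swap,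
      pow_succ]
    module

lemma mulRightFst_ιMulti_transfer_pow_succ_mem (k : ℕ) (y : Fin k → Fin n → K) {p q : ℕ}
    {t : ExtAlg K n ⊗[K] ExtAlg K n} (ht : t ∈ bideg K n (p + 1) q) :
    mulRightFst (ιMulti K k y) ((transfer K n ^ (k + 1)) t) ∈
      (bideg K n (p + 1) (q + k)).map (transfer K n) := by
  induction k generalizing p q t with
  | zero => exact ⟨t, ht, by simp [mulRightFst]⟩
  | succ k ih =>
    rw [ιMulti_succ_apply, mulRightFst_mul, mulRightFst_ι_transfer_pow, map_sub, map_smul,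
      map_smul, map_smul]
    refine sub_mem (Submodule.smul_mem _ _ (Submodule.smul_mem _ _ ?_)) (Submodule.smul_mem _ _ ?_)
    · have := ih (Matrix.vecTail y) (mulLeftSnd_mem_bideg (y 0) ht)
      rwa [add_right_comm, add_assoc] at this
    · rw [pow_succ, Module.End.mul_apply]
      have := ih (Matrix.vecTail y) (transfer_mem_bideg (mulRightFst_mem_bideg (y 0) ht))
      rwa [add_right_comm, add_assoc] at this

lemma mulRightFst_ιMulti_transfer_pow_sub_mem (k : ℕ) (y : Fin k → Fin n → K) {p q : ℕ}
    {t : ExtAlg K n ⊗[K] ExtAlg K n} (ht : t ∈ bideg K n p q) :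
    mulRightFst (ιMulti K k y) ((transfer K n ^ k) t) -
        (k.factorial : K) • mulLeftSnd (ιMulti K k y) t ∈
      (bideg K n (p + 1) (q + k - 1)).map (transfer K n) := by
  induction k generalizing p q t with
  | zero => simp [mulRightFst, mulLeftSnd]
  | succ k ih =>
    have h₁ := ih (Matrix.vecTail y) (mulLeftSnd_mem_bideg (y 0) ht)
    have h₂ := mulRightFst_ιMulti_transfer_pow_succ_mem k (Matrix.vecTail y)
      (mulRightFst_mem_bideg (y 0) ht)
    rw [mulLeftSnd_ι_comm, ← mulLeftSnd_mul, ← ιMulti_succ_apply, add_right_comm,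
      Nat.add_sub_cancel] at h₁
    rw [ιMulti_succ_apply, mulRightFst_mul, mulRightFst_ι_transfer_pow, ← ιMulti_succ_apply]
    have h₃ := sub_mem (Submodule.smul_mem _ ((-1 : K) ^ k * ((k + 1 : ℕ) : K)) h₁)
      (Submodule.smul_mem _ ((-1 : K) ^ k) h₂)
    have hsq : (-1 : K) ^ k * (-1 : K) ^ k = 1 := by rw [← mul_pow]; simp
    have hcoef : (((k + 1).factorial : ℕ) : K) =
        (-1 : K) ^ k * ((k + 1 : ℕ) : K) * (k.factorial : K) * (-1 : K) ^ k := by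
      rw [Nat.factorial_succ, Nat.cast_mul]
      linear_combination (-((k + 1 : ℕ) : K) * (k.factorial : K)) * hsq
    rw [show q + (k + 1) - 1 = q + k from rfl, hcoef]
    convert h₃ using 1
    simp only [map_sub, map_smul]
    module

/-- The tensor `(u_1 ∧ ⋯ ∧ u_p) ⊗ (u_{p+1} ∧ ⋯ ∧ u_{p+q} ∧ z)`. -/
def splitTmul {p q N : ℕ} (h : p + q = N) (z : ExtAlg K n) (u : Fin N → Fin n → K) :
    ExtAlg K n ⊗[K] ExtAlg K n :=
  ιMulti K p (fun i => u (Fin.cast h (Fin.castAdd q i))) ⊗ₜ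
    (ιMulti K q (fun i => u (Fin.cast h (Fin.natAdd p i))) * z)

/-- The sum of `splitTmul` over all reorderings of the given vectors, with signs. -/
def antisymmSplit {p q N : ℕ} (h : p + q = N) (z : ExtAlg K n) (u : Fin N → Fin n → K) :
    ExtAlg K n ⊗[K] ExtAlg K n :=
  ∑ σ : Equiv.Perm (Fin N), (Equiv.Perm.sign σ : ℤ) • splitTmul h z (u ∘ σ)

lemma antisymmSplit_comp_perm {p q N : ℕ} (h : p + q = N) (z : ExtAlg K n)
    (u : Fin N → Fin n → K) (τ : Equiv.Perm (Fin N)) :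
    ∑ σ : Equiv.Perm (Fin N), (Equiv.Perm.sign σ : ℤ) • (Equiv.Perm.sign τ : ℤ) •
      splitTmul h z (u ∘ σ ∘ τ) = antisymmSplit h z u := by
  rw [antisymmSplit, ← Equiv.sum_comp (Equiv.mulRight τ) fun σ : Equiv.Perm (Fin N) =>
    (Equiv.Perm.sign σ : ℤ) • splitTmul h z (u ∘ σ)]
  refine Finset.sum_congr rfl fun σ _ => ?_
  rw [smul_smul]
  simp [Equiv.Perm.sign_mul, Function.comp_def]

/-- The permutation `cycleLast i` of `0, …, p`, extended by the identity. -/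
def cycleLastExt {p q N : ℕ} (h : p + 1 + q = N) (i : Fin (p + 1)) : Equiv.Perm (Fin N) :=
  (cycleLast i).viaFintypeEmbedding (Fin.castLEEmb (by omega : p + 1 ≤ N))

lemma transfer_splitTmul {p q N : ℕ} (h : p + 1 + q = N) (z : ExtAlg K n)
    (u : Fin N → Fin n → K) :
    transfer K n (splitTmul h z u) =
      ∑ i : Fin (p + 1), (Equiv.Perm.sign (cycleLastExt h i) : ℤ) •
        splitTmul (show p + (q + 1) = N by omega) z (u ∘ cycleLastExt h i) := by
  rw [splitTmul, transfer_ιMulti_tmul]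
  refine Finset.sum_congr rfl fun i _ => ?_
  have hlow (j : Fin (p + 1)) : cycleLastExt h i (Fin.castLE (by omega) j) =
      Fin.cast h (Fin.castAdd q (cycleLast i j)) :=
    Equiv.Perm.viaFintypeEmbedding_apply_image (cycleLast i) (Fin.castLEEmb _) j
  have hhigh (j : Fin q) : cycleLastExt h i (Fin.cast h (Fin.natAdd (p + 1) j)) =
      Fin.cast h (Fin.natAdd (p + 1) j) := by
    refine Equiv.Perm.viaFintypeEmbedding_apply_notMem_range _ _ ?_
    rintro ⟨k, hk⟩
    have := congrArg Fin.val hk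
    have := k.isLt
    simp at *
    omega
  have hmid : cycleLastExt h i (Fin.cast (by omega) (Fin.natAdd p (0 : Fin (q + 1)))) =
      Fin.cast h (Fin.castAdd q (cycleLast i (Fin.last p))) := by
    rw [← hlow]; rfl
  have htail (j : Fin q) :
      cycleLastExt h i (Fin.cast (by omega) (Fin.natAdd p j.succ)) =
        Fin.cast h (Fin.natAdd (p + 1) j) := by
    rw [← hhigh]
    congr 1
    ext
    simp
    omega
  rw [splitTmul, ιMulti_succ_apply, mul_assoc]
  simp only [Function.comp_apply, Matrix.vecTail, hmid]
  congr 1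
  · simp [cycleLastExt]
  · congr 3
    · funext j
      rw [← hlow]
      rfl
    · exact congrArg _ (funext fun j => congrArg u (htail j).symm)

lemma transfer_antisymmSplit {p q N : ℕ} (h : p + 1 + q = N) (z : ExtAlg K n)
    (u : Fin N → Fin n → K) :
    transfer K n (antisymmSplit h z u) =
      (p + 1) • antisymmSplit (show p + (q + 1) = N by omega) z u := by
  rw [antisymmSplit, map_sum]
  simp_rw [map_zsmul, transfer_splitTmul, Finset.smul_sum]
  rw [Finset.sum_comm]
  simp_rw [Function.comp_assoc, antisymmSplit_comp_perm]
  simp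

lemma nsmul_cancel [CharZero K] {M : Type*} [AddCommGroup M] [Module K M] {m : ℕ} (hm : m ≠ 0)
    {x y : M} (h : m • x = m • y) : x = y := by
  rw [← Nat.cast_smul_eq_nsmul K, ← Nat.cast_smul_eq_nsmul K] at h
  exact smul_right_injective M (Nat.cast_ne_zero.2 hm) h

lemma factorial_smul_transfer_pow [CharZero K] {p q N : ℕ} (h : p + q = N) (z : ExtAlg K n)
    (u : Fin N → Fin n → K) :
    p.factorial • (transfer K n ^ q) (ιMulti K N u ⊗ₜ z) = antisymmSplit h z u := by
  induction q generalizing p with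
  | zero =>
    obtain rfl : N = p := h.symm
    have hterm (σ : Equiv.Perm (Fin N)) :
        (Equiv.Perm.sign σ : ℤ) • splitTmul h z (u ∘ σ) = ιMulti K N u ⊗ₜ[K] z := by
      have : splitTmul h z (u ∘ σ) = ιMulti K N (u ∘ σ) ⊗ₜ[K] z := by
        simp [splitTmul]
        rfl
      rw [this, AlternatingMap.map_perm, Units.smul_def, ← TensorProduct.smul_tmul', smul_smul]
      simp
    simp [antisymmSplit, hterm, Fintype.card_perm]
  | succ q ih =>
    have h' := ih (p := p + 1) (by omega)
    have h₂ := congrArg (transfer K n) h'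
    rw [transfer_antisymmSplit, map_nsmul, Nat.factorial_succ, mul_smul,
      ← Module.End.mul_apply, ← pow_succ'] at h₂
    exact nsmul_cancel (K := K) p.succ_ne_zero h₂

/-- The permutation of `Fin (p + q)` acting on the first `p` and last `q` elements separately. -/
def blockPerm {p q : ℕ} (α : Equiv.Perm (Fin p)) (β : Equiv.Perm (Fin q)) :
    Equiv.Perm (Fin (p + q)) :=
  finSumFinEquiv.permCongr (Equiv.Perm.sumCongr α β)

@[simp]
lemma blockPerm_castAdd {p q : ℕ} (α : Equiv.Perm (Fin p)) (β : Equiv.Perm (Fin q)) (i : Fin p) :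
    blockPerm α β (Fin.castAdd q i) = Fin.castAdd q (α i) := by
  simp [blockPerm, Equiv.permCongr_apply]

@[simp]
lemma blockPerm_natAdd {p q : ℕ} (α : Equiv.Perm (Fin p)) (β : Equiv.Perm (Fin q)) (i : Fin q) :
    blockPerm α β (Fin.natAdd p i) = Fin.natAdd p (β i) := by
  simp [blockPerm, Equiv.permCongr_apply]

lemma sign_blockPerm {p q : ℕ} (α : Equiv.Perm (Fin p)) (β : Equiv.Perm (Fin q)) :
    Equiv.Perm.sign (blockPerm α β) = Equiv.Perm.sign α * Equiv.Perm.sign β := by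
  simp [blockPerm]

lemma mem_shuffles_iff {p q : ℕ} (σ : Equiv.Perm (Fin (p + q))) :
    σ ∈ shuffles p q ↔
      StrictMono (fun i => σ (Fin.castAdd q i)) ∧ StrictMono (fun i => σ (Fin.natAdd p i)) := by
  simp only [shuffles, Finset.mem_filter, Finset.mem_univ, true_and]
  refine and_congr ⟨fun h i j hij => ?_, fun h i j hij hj => ?_⟩
    ⟨fun h i j hij => ?_, fun h i j hij hi => ?_⟩
  · exact h _ _ hij (by simp)
  · exact h (a := ⟨i, by omega⟩) (b := ⟨j, hj⟩) (by simpa using hij)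
  · exact h _ _ (Nat.add_lt_add_left hij p) (by simp)
  · have := h (a := ⟨i - p, by omega⟩) (b := ⟨j - p, by omega⟩)
      (by simp only [Fin.lt_def] at hij ⊢; omega)
    have e (l : Fin (p + q)) (hl : p ≤ l) : Fin.natAdd p ⟨l - p, by omega⟩ = l := by
      ext
      simp
      omega
    simpa only [e i hi, e j (by rw [Fin.lt_def] at hij; omega)] using this

lemma blockPerm_unique {p q : ℕ} {s s' : Equiv.Perm (Fin (p + q))} (hs : s ∈ shuffles p q)
    (hs' : s' ∈ shuffles p q) {α α' : Equiv.Perm (Fin p)} {β β' : Equiv.Perm (Fin q)}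
    (h : s * blockPerm α β = s' * blockPerm α' β') : s = s' ∧ α = α' ∧ β = β' := by
  rw [mem_shuffles_iff] at hs hs'
  have h₁ (i : Fin p) : s (Fin.castAdd q (α i)) = s' (Fin.castAdd q (α' i)) := by
    simpa using Equiv.congr_fun h (Fin.castAdd q i)
  have h₂ (i : Fin q) : s (Fin.natAdd p (β i)) = s' (Fin.natAdd p (β' i)) := by
    simpa using Equiv.congr_fun h (Fin.natAdd p i)
  have e₁ := (hs.1.range_inj hs'.1).1 (by
    rw [← α.surjective.range_comp, ← α'.surjective.range_comp fun i => s' (Fin.castAdd q i)]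
    exact congrArg Set.range (funext h₁))
  have e₂ := (hs.2.range_inj hs'.2).1 (by
    rw [← β.surjective.range_comp, ← β'.surjective.range_comp fun i => s' (Fin.natAdd p i)]
    exact congrArg Set.range (funext h₂))
  obtain rfl : s = s' := by
    ext i
    induction i using Fin.addCases with
    | left i => exact congrArg Fin.val (congrFun e₁ i)
    | right i => exact congrArg Fin.val (congrFun e₂ i)
  refine ⟨rfl, ?_, ?_⟩
  · ext i; simpa using congrArg Fin.val (hs.1.injective (h₁ i))
  · ext i; simpa using congrArg Fin.val (hs.2.injective (h₂ i))

lemma exists_shuffle_mul_blockPerm {p q : ℕ} (σ : Equiv.Perm (Fin (p + q))) :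
    ∃ s ∈ shuffles p q, ∃ α β, s * blockPerm α β = σ := by
  let α := Tuple.sort fun i => σ (Fin.castAdd q i)
  let β := Tuple.sort fun i => σ (Fin.natAdd p i)
  refine ⟨σ * blockPerm α β, ?_, α⁻¹, β⁻¹, ?_⟩
  · rw [mem_shuffles_iff]
    constructor
    · simpa [Function.comp_def] using
        (Tuple.monotone_sort fun i => σ (Fin.castAdd q i)).strictMono_of_injective
        ((σ.injective.comp (Fin.castAdd_injective p q)).comp α.injective)
    · simpa [Function.comp_def] using
        (Tuple.monotone_sort fun i => σ (Fin.natAdd p i)).strictMono_of_injective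
        ((σ.injective.comp (Fin.natAdd_injective q p)).comp β.injective)
  · ext i
    induction i using Fin.addCases <;> simp

lemma antisymmSplit_eq_sum_shuffles {p q : ℕ} (z : ExtAlg K n) (u : Fin (p + q) → Fin n → K) :
    antisymmSplit rfl z u = (p.factorial * q.factorial) •
      ∑ s ∈ shuffles p q, (Equiv.Perm.sign s : ℤ) • splitTmul rfl z (u ∘ s) := by
  have hterm (s : Equiv.Perm (Fin (p + q))) (α : Equiv.Perm (Fin p)) (β : Equiv.Perm (Fin q)) :
      (Equiv.Perm.sign (s * blockPerm α β) : ℤ) • splitTmul rfl z (u ∘ (s * blockPerm α β)) =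
        (Equiv.Perm.sign s : ℤ) • splitTmul rfl z (u ∘ s) := by
    have h₁ := AlternatingMap.map_perm (ιMulti K p) (fun i => u (s (Fin.castAdd q i))) α
    have h₂ := AlternatingMap.map_perm (ιMulti K q) (fun i => u (s (Fin.natAdd p i))) β
    simp only [Function.comp_def] at h₁ h₂
    simp only [splitTmul, Function.comp_apply, Equiv.Perm.mul_apply, Fin.cast_refl, id,
      blockPerm_castAdd, blockPerm_natAdd, h₁, h₂, sign_blockPerm, map_mul, Units.smul_def,
      smul_mul_assoc, ← TensorProduct.smul_tmul', TensorProduct.tmul_smul, smul_smul]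
    congr 1
    rcases Int.units_eq_one_or (Equiv.Perm.sign α) with ha | ha <;>
      rcases Int.units_eq_one_or (Equiv.Perm.sign β) with hb | hb <;> simp [ha, hb]
  calc antisymmSplit rfl z u
      = ∑ x ∈ shuffles p q ×ˢ (Finset.univ : Finset (Equiv.Perm (Fin p) × Equiv.Perm (Fin q))),
          (Equiv.Perm.sign x.1 : ℤ) • splitTmul rfl z (u ∘ x.1) := by
        symm
        refine Finset.sum_bij (fun x _ => x.1 * blockPerm x.2.1 x.2.2)
          (fun _ _ => Finset.mem_univ _)
          ?_ ?_ (fun x _ => (hterm _ _ _).symm)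
        · rintro ⟨s, α, β⟩ hx ⟨s', α', β'⟩ hx' h
          simp only [Finset.mem_product, Finset.mem_univ, and_true] at hx hx'
          obtain ⟨rfl, rfl, rfl⟩ := blockPerm_unique hx hx' h
          rfl
        · intro σ _
          obtain ⟨s, hs, α, β, rfl⟩ := exists_shuffle_mul_blockPerm σ
          exact ⟨(s, α, β), by simpa using hs, rfl⟩
    _ = _ := by
        rw [Finset.sum_product]
        simp [Fintype.card_perm, Finset.smul_sum]

lemma factorial_smul_sum_shuffles [CharZero K] {p q : ℕ} (z : ExtAlg K n)
    (u : Fin (p + q) → Fin n → K) :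
    (q.factorial : K) •
      ∑ s ∈ shuffles p q, (Equiv.Perm.sign s : ℤ) • splitTmul rfl z (u ∘ s) =
        (transfer K n ^ q) (ιMulti K (p + q) u ⊗ₜ z) := by
  have h := factorial_smul_transfer_pow (p := p) (q := q) rfl z u
  rw [antisymmSplit_eq_sum_shuffles, mul_smul] at h
  rw [Nat.cast_smul_eq_nsmul]
  exact (nsmul_cancel (K := K) p.factorial_ne_zero h).symm

end LinearAlgebra

section ExteriorPowers

variable {K : Type} [Field K] {n : ℕ}

open ExteriorAlgebra

lemma coe_ecast {p q : ℕ} (h : p = q) (x : Lam K n p) : (ecast K n h x : ExtAlg K n) = x := by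
  subst h
  rfl

lemma span_range_wedge (p : ℕ) : Submodule.span K (Set.range (wedge K n (p := p))) = ⊤ :=
  exteriorPower.ιMulti_span K p (Fin n → K)

lemma wedge_induction {p : ℕ} {P : Lam K n p → Prop} (hw : ∀ v, P (wedge K n v))
    (h0 : P 0) (hadd : ∀ x y, P x → P y → P (x + y)) (hsmul : ∀ (r : K) x, P x → P (r • x))
    (x : Lam K n p) : P x := by
  have hx : x ∈ Submodule.span K (Set.range (wedge K n (p := p))) := by
    rw [span_range_wedge]; trivial
  induction hx using Submodule.span_induction with
  | mem x hx => obtain ⟨v, rfl⟩ := hx; exact hw v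
  | zero => exact h0
  | add x y _ _ hx hy => exact hadd x y hx hy
  | smul r x _ hx => exact hsmul r x hx

/-- The inclusion of `Λ^p ⊗ Λ^q` into the tensor square of the exterior algebra. -/
def inclTensor (K : Type) [Field K] (n p q : ℕ) :
    Lam K n p ⊗[K] Lam K n q →ₗ[K] ExtAlg K n ⊗[K] ExtAlg K n :=
  TensorProduct.map (⋀[K]^p (Fin n → K)).subtype (⋀[K]^q (Fin n → K)).subtype

@[simp]
lemma inclTensor_tmul {p q : ℕ} (x : Lam K n p) (z : Lam K n q) :
    inclTensor K n p q (x ⊗ₜ z) = (x : ExtAlg K n) ⊗ₜ (z : ExtAlg K n) := rfl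

lemma range_inclTensor (p q : ℕ) : LinearMap.range (inclTensor K n p q) = bideg K n p q := rfl

lemma inclTensor_injective (p q : ℕ) : Function.Injective (inclTensor K n p q) :=
  TensorProduct.map_injective_of_flat_flat _ _ (Submodule.subtype_injective _)
    (Submodule.subtype_injective _)

lemma inclTensor_congr_ecast {p p' q q' : ℕ} (hp : p = p') (hq : q = q')
    (t : Lam K n p ⊗[K] Lam K n q) :
    inclTensor K n p' q' (TensorProduct.congr (ecast K n hp) (ecast K n hq) t) =
      inclTensor K n p q t := by
  subst hp hq
  congr 1
  exact LinearMap.congr_fun (TensorProduct.map_id (R := K) (M := Lam K n p) (N := Lam K n q)) t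

lemma coe_mulMap {p q : ℕ} {m : Lam K n p ⊗[K] Lam K n q →ₗ[K] Lam K n (p + q)}
    (hm : IsMulMap K n p q m) (x : Lam K n p) (y : Lam K n q) :
    (m (x ⊗ₜ y) : ExtAlg K n) = (x : ExtAlg K n) * y := by
  induction x using wedge_induction with
  | h0 => simp
  | hadd x x' hx hx' => simp [TensorProduct.add_tmul, add_mul, hx, hx']
  | hsmul r x hx => simp [← TensorProduct.smul_tmul', hx]
  | hw v =>
    induction y using wedge_induction with
    | h0 => simp
    | hadd x x' hx hx' => simp [TensorProduct.tmul_add, mul_add, hx, hx']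
    | hsmul r x hx => simp [hx]
    | hw w =>
      rw [hm v w]
      exact (ιMulti_mul_ιMulti v w).symm

/-- The map `Λ^p ⊗ Λ^q → Λ ⊗ Λ`, `x ⊗ y ↦ x ⊗ (y ∧ z)`. -/
def inclTensorMul (p q : ℕ) (z : ExtAlg K n) :
    Lam K n p ⊗[K] Lam K n q →ₗ[K] ExtAlg K n ⊗[K] ExtAlg K n :=
  TensorProduct.map (⋀[K]^p (Fin n → K)).subtype
    (LinearMap.mulRight K z ∘ₗ (⋀[K]^q (Fin n → K)).subtype)

@[simp]
lemma inclTensorMul_tmul {p q : ℕ} (z : ExtAlg K n) (x : Lam K n p) (y : Lam K n q) :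
    inclTensorMul p q z (x ⊗ₜ y) = (x : ExtAlg K n) ⊗ₜ[K] ((y : ExtAlg K n) * z) := rfl

lemma factorial_smul_comulMap [CharZero K] {p q : ℕ}
    {D : Lam K n (p + q) →ₗ[K] Lam K n p ⊗[K] Lam K n q} (hD : IsComulMap K n p q D)
    (x : Lam K n (p + q)) (z : ExtAlg K n) :
    (q.factorial : K) • inclTensorMul p q z (D x) =
      (transfer K n ^ q) ((x : ExtAlg K n) ⊗ₜ z) := by
  induction x using wedge_induction with
  | h0 => simp
  | hadd x y hx hy => simp only [map_add, smul_add, hx, hy, Submodule.coe_add,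
      TensorProduct.add_tmul]
  | hsmul r x hx =>
    simp only [map_smul, Submodule.coe_smul, ← TensorProduct.smul_tmul', ← hx]
    rw [smul_comm]
  | hw v =>
    rw [hD v, map_sum]
    simp_rw [map_zsmul]
    exact factorial_smul_sum_shuffles z v

variable {mf : ∀ p q : ℕ, Lam K n p ⊗[K] Lam K n q →ₗ[K] Lam K n (p+q)}
variable {Df : ∀ p q : ℕ, Lam K n (p+q) →ₗ[K] Lam K n p ⊗[K] Lam K n q}

lemma inclTensor_mulMap_assoc (hmf : ∀ p q, IsMulMap K n p q (mf p q)) {p t b c : ℕ}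
    (h : t + b = c) (d : Lam K n p ⊗[K] Lam K n t) (z : Lam K n b) :
    inclTensor K n p c (TensorProduct.map LinearMap.id
      ((ecast K n h).toLinearMap ∘ₗ mf t b)
        (TensorProduct.assoc K (Lam K n p) (Lam K n t) (Lam K n b) (d ⊗ₜ z))) =
      inclTensorMul p t z d := by
  induction d with
  | zero => simp
  | add x y hx hy => simp only [TensorProduct.add_tmul, map_add, hx, hy]
  | tmul x y => simp [coe_ecast, coe_mulMap (hmf t b)]

lemma inclTensor_theta1 [CharZero K] (hmf : ∀ p q, IsMulMap K n p q (mf p q))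
    (hDf : ∀ p q, IsComulMap K n p q (Df p q)) {a b : ℕ} (hb : 1 ≤ b)
    (t : Lam K n (a + 1) ⊗[K] Lam K n (b - 1)) :
    inclTensor K n a b (theta1 K n mf Df a b hb t) =
      transfer K n (inclTensor K n (a + 1) (b - 1) t) := by
  induction t with
  | zero => simp
  | add x y hx hy => simp only [map_add, hx, hy]
  | tmul x z =>
    have h := factorial_smul_comulMap (hDf (a + 1 - 1) 1)
      (ecast K n (by omega : a + 1 = (a + 1 - 1) + 1) x) (z : ExtAlg K n)
    rw [coe_ecast, pow_one, Nat.factorial_one, Nat.cast_one, one_smul] at h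
    rw [inclTensor_tmul, ← h, ← inclTensor_mulMap_assoc hmf (by omega : 1 + (b - 1) = b - 1 + 1)]
    simp only [theta1, LinearMap.comp_apply, LinearEquiv.coe_coe]
    rw [inclTensor_congr_ecast]
    rfl

lemma inclTensor_pairMul (hmf : ∀ p q, IsMulMap K n p q (mf p q)) {p q k c : ℕ}
    (d : Lam K n p ⊗[K] Lam K n q) (y : Lam K n k) (z : Lam K n c) :
    inclTensor K n (p + k) (q + c) (pairMul K n mf p q k c (d ⊗ₜ (y ⊗ₜ z))) =
      mulRightFst (y : ExtAlg K n) (inclTensorMul p q z d) := by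
  induction d with
  | zero => simp
  | add s t hs ht => simp only [TensorProduct.add_tmul, map_add, hs, ht]
  | tmul u v => simp [pairMul, coe_mulMap (hmf _ _)]

lemma factorial_smul_inclTensor_betaMap [CharZero K] (hmf : ∀ p q, IsMulMap K n p q (mf p q))
    (hDf : ∀ p q, IsComulMap K n p q (Df p q)) {a b k : ℕ} (hka : k ≤ a) (hkb : k ≤ b)
    (x : Lam K n a) (y : Lam K n k) (z : Lam K n (b - k)) :
    (k.factorial : K) • inclTensor K n a b (betaMap K n mf Df a b k hka hkb (x ⊗ₜ (y ⊗ₜ z))) =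
      mulRightFst (y : ExtAlg K n)
        ((transfer K n ^ k) ((x : ExtAlg K n) ⊗ₜ[K] (z : ExtAlg K n))) := by
  have h := factorial_smul_comulMap (hDf (a - k) k)
    (ecast K n (by omega : a = (a - k) + k) x) (z : ExtAlg K n)
  rw [coe_ecast] at h
  rw [← h, map_smul, ← inclTensor_pairMul hmf]
  simp only [betaMap, LinearMap.comp_apply, LinearEquiv.coe_coe]
  rw [inclTensor_congr_ecast]
  rfl

lemma factorial_smul_inclTensor_gammaMap [CharZero K] (hmf : ∀ p q, IsMulMap K n p q (mf p q))
    (hDf : ∀ p q, IsComulMap K n p q (Df p q)) {a b k : ℕ} (hka : k ≤ a) (hkb : k ≤ b)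
    (x : Lam K n a) (y : Lam K n k) (z : Lam K n (b - k)) :
    (k.factorial : K) • inclTensor K n a b (gammaMap K n mf Df a b k hka hkb (x ⊗ₜ (y ⊗ₜ z))) =
      (k.factorial : K) • mulLeftSnd (y : ExtAlg K n)
          ((x : ExtAlg K n) ⊗ₜ[K] (z : ExtAlg K n)) -
        mulRightFst (y : ExtAlg K n)
          ((transfer K n ^ k) ((x : ExtAlg K n) ⊗ₜ[K] (z : ExtAlg K n))) := by
  rw [gammaMap, LinearMap.sub_apply, map_sub, smul_sub,
    factorial_smul_inclTensor_betaMap hmf hDf]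
  simp [coe_ecast, coe_mulMap (hmf _ _)]

lemma gammaMap_wedge_mem [CharZero K] (hmf : ∀ p q, IsMulMap K n p q (mf p q))
    (hDf : ∀ p q, IsComulMap K n p q (Df p q)) {a b k : ℕ} (hka : k ≤ a) (hkb : k ≤ b)
    (hb : 1 ≤ b) (x : Lam K n a) (y : Fin k → Fin n → K) (z : Lam K n (b - k)) :
    gammaMap K n mf Df a b k hka hkb (x ⊗ₜ (wedge K n y ⊗ₜ z)) ∈
      LinearMap.range (theta1 K n mf Df a b hb) := by
  have hfac : (k.factorial : K) ≠ 0 := Nat.cast_ne_zero.2 k.factorial_ne_zero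
  have h := mulRightFst_ιMulti_transfer_pow_sub_mem k y (tmul_mem_bideg x.2 z.2)
  rw [Nat.sub_add_cancel hkb, ← neg_mem_iff, neg_sub, ← range_inclTensor] at h
  obtain ⟨_, ⟨t, rfl⟩, ht⟩ := h
  rw [← inclTensor_theta1 hmf hDf hb] at ht
  refine (Submodule.smul_mem_iff _ hfac).1 ⟨t, inclTensor_injective a b ?_⟩
  rw [ht, map_smul, factorial_smul_inclTensor_gammaMap hmf hDf]
  rfl

end ExteriorPowers

/-- Lemma 5.2 of the paper: `Im(γ_k) ⊆ Im(θ_1)` for `a ≥ b ≥ k ≥ 1`. -/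
theorem statement9 (K : Type) [Field K] [CharZero K] (n : ℕ) (a b k : ℕ)
    (hba : b ≤ a) (hk1 : 1 ≤ k) (hkb : k ≤ b)
    (mf : ∀ p q : ℕ, Lam K n p ⊗[K] Lam K n q →ₗ[K] Lam K n (p+q))
    (Df : ∀ p q : ℕ, Lam K n (p+q) →ₗ[K] Lam K n p ⊗[K] Lam K n q)
    (hmf : ∀ p q, IsMulMap K n p q (mf p q))
    (hDf : ∀ p q, IsComulMap K n p q (Df p q)) :
    LinearMap.range (gammaMap K n mf Df a b k (hkb.trans hba) hkb) ≤
      LinearMap.range (theta1 K n mf Df a b (hk1.trans hkb)) := by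
  rintro _ ⟨t, rfl⟩
  induction t with
  | zero => simp
  | add s t hs ht => rw [map_add]; exact add_mem hs ht
  | tmul x w =>
    induction w with
    | zero => simp
    | add s t hs ht => rw [TensorProduct.tmul_add, map_add]; exact add_mem hs ht
    | tmul y z =>
      induction y using wedge_induction with
      | hw v => exact gammaMap_wedge_mem hmf hDf (hkb.trans hba) hkb (hk1.trans hkb) x v z
      | h0 => simp
      | hadd y y' hy hy' =>
        rw [TensorProduct.add_tmul, TensorProduct.tmul_add, map_add]
        exact add_mem hy hy'
      | hsmul r y hy =>
        rw [← TensorProduct.smul_tmul', TensorProduct.tmul_smul, map_smul]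
        exact Submodule.smul_mem _ _ hy

end MMS
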